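/- Assume N(f) ≠ {0}. Then sup_{P ∈ 𝒫(Z)} B(P,ℰ) = sup_{u ∈ N(f)\{0}} B̄(u). Moreover, if P ∈ 𝒫(Z) is a global maximizer of Q ↦ B(Q,ℰ) with B(P,ℰ) > 0, then u := P − Π_P belongs to N(f)\{0}, u is a global maximizer of B̄ over N(f)\{0}, and B̄(u) = B(P,ℰ). -/

import Mathlib

theorem aux_conv (b : ℝ → ℝ) (hc : ContinuousOn b (Set.Ici 0))
    (hs : StrictConvexOn ℝ (Set.Ioi 0) b) : ConvexOn ℝ (Set.Ici 0) b := by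
  refine ⟨convex_Ici 0, ?_⟩
  intro x hx y hy s t hs0 ht0 hst
  simp only [smul_eq_mul, Set.mem_Ici] at *
  have key : ∀ w : ℝ, 0 ≤ w →
      Filter.Tendsto (fun ε => b (w + ε)) (nhdsWithin 0 (Set.Ioi 0)) (nhds (b w)) := by
    intro w hw
    have h1 : Filter.Tendsto b (nhdsWithin w (Set.Ici 0)) (nhds (b w)) := hc w hw
    refine h1.comp ?_
    refine tendsto_nhdsWithin_iff.2 ⟨?_, ?_⟩
    · have : Filter.Tendsto (fun ε : ℝ => w + ε) (nhds 0) (nhds (w + 0)) :=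
        (continuous_const.add continuous_id).tendsto 0
      rw [add_zero] at this
      exact this.mono_left nhdsWithin_le_nhds
    · filter_upwards [self_mem_nhdsWithin] with ε hε
      have : (0:ℝ) < ε := hε
      simp only [Set.mem_Ici]; linarith
  have hxy : 0 ≤ s * x + t * y := by positivity
  refine le_of_tendsto_of_tendsto (key _ hxy)
    (((key x hx).const_mul s).add ((key y hy).const_mul t)) ?_
  filter_upwards [self_mem_nhdsWithin] with ε hε
  have hε' : (0:ℝ) < ε := hε
  have := hs.convexOn.2 (x := x + ε) (y := y + ε) (by simp only [Set.mem_Ioi]; linarith)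
    (by simp only [Set.mem_Ioi]; linarith) hs0 ht0 hst
  simp only [smul_eq_mul] at this
  have e1 : s * (x + ε) + t * (y + ε) = s * x + t * y + ε := by
    linear_combination ε * hst
  rwa [e1] at this

theorem aux_grad (b : ℝ → ℝ) (hc : ConvexOn ℝ (Set.Ici 0) b) (p q b' : ℝ) (hp : 0 ≤ p)
    (hq : 0 < q) (hd : HasDerivAt b b' q) : 0 ≤ b p - b q - b' * (p - q) := by
  rcases lt_trichotomy p q with h | h | h
  · have := hc.slope_le_of_hasDerivAt (x := p) (y := q) hp hq.le h hd
    rw [slope_def_field, div_le_iff₀ (by linarith)] at this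
    linarith
  · subst h; simp
  · have := hc.le_slope_of_hasDerivAt (x := q) (y := p) hq.le hp h hd
    rw [slope_def_field, le_div_iff₀ (by linarith)] at this
    linarith

/-- strong duality via separation -/
theorem aux_dual {Z : Type} [Fintype Z] {d : ℕ} (f : Z → Fin d → ℝ)
    (H : (Z → ℝ) → ℝ) (hHc : ContinuousOn H (stdSimplex ℝ Z))
    (hHv : ConvexOn ℝ (stdSimplex ℝ Z) H) (P : Z → ℝ) (R : Z → ℝ)
    (hR : R ∈ stdSimplex ℝ Z) (hRP : ∀ i, ∑ z, R z * f z i = ∑ z, P z * f z i)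
    (hmin : ∀ Q ∈ stdSimplex ℝ Z, (∀ i, ∑ z, Q z * f z i = ∑ z, P z * f z i) → H R ≤ H Q)
    (ε : ℝ) (hε : 0 < ε) :
    ∃ θ : Fin d → ℝ, ∀ Q ∈ stdSimplex ℝ Z,
      H R - ε ≤ H Q - ∑ i, θ i * (∑ z, Q z * f z i - ∑ z, P z * f z i) := by
  let m : (Z → ℝ) → Fin d → ℝ := fun Q i => ∑ z, Q z * f z i
  have hm : Continuous m := by
    refine continuous_pi fun i => ?_
    exact continuous_finsetSum _ fun z _ => (continuous_apply z).mul continuous_const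
  let K : Set ((Fin d → ℝ) × ℝ) := {x | ∃ Q ∈ stdSimplex ℝ Z, m Q = x.1 ∧ H Q ≤ x.2}
  have hKconv : Convex ℝ K := by
    rintro x ⟨Q, hQ, h1, h2⟩ y ⟨Q', hQ', h1', h2'⟩ a b ha hb hab
    refine ⟨a • Q + b • Q', convex_stdSimplex ℝ Z hQ hQ' ha hb hab, ?_, ?_⟩
    · simp only [Prod.fst_add, Prod.smul_fst, ← h1, ← h1']
      funext i
      simp only [m, Pi.add_apply, Pi.smul_apply, smul_eq_mul, Finset.mul_sum,
        ← Finset.sum_add_distrib]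
      exact Finset.sum_congr rfl fun z _ => by ring
    · refine (hHv.2 hQ hQ' ha hb hab).trans ?_
      simp only [Prod.snd_add, Prod.smul_snd, smul_eq_mul]
      gcongr
  have hKcl : IsClosed K := by
    have hC : IsCompact ((fun Q => (m Q, H Q)) '' stdSimplex ℝ Z) :=
      (isCompact_stdSimplex ℝ Z).image_of_continuousOn (hm.continuousOn.prodMk hHc)
    have hT : IsClosed (({0} : Set (Fin d → ℝ)) ×ˢ Set.Ici (0:ℝ)) :=
      isClosed_singleton.prod isClosed_Ici
    have hs := hT.add_left_of_isCompact hC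
    convert hs using 1
    ext x
    constructor
    · rintro ⟨Q, hQ, h1, h2⟩
      refine Set.mem_add.2 ⟨(m Q, H Q), ⟨Q, hQ, rfl⟩, (0, x.2 - H Q), ⟨rfl, ?_⟩, ?_⟩
      · simpa using h2
      · ext <;> simp [h1]
    · intro hx
      obtain ⟨_, ⟨Q, hQ, rfl⟩, y, ⟨hy1, hy2⟩, rfl⟩ := Set.mem_add.1 hx
      refine ⟨Q, hQ, ?_, ?_⟩
      · have : y.1 = 0 := hy1
        simp [this]
      · have : 0 ≤ y.2 := hy2
        simpa using this
  have hnot : (m P, H R - ε) ∉ K := by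
    rintro ⟨Q, hQ, h1, h2⟩
    have := hmin Q hQ (fun i => congrFun h1 i)
    simp only at h2
    linarith
  obtain ⟨g, c, hg1, hg2⟩ := geometric_hahn_banach_point_closed hKconv hKcl hnot
  let a : Fin d → ℝ := fun i => g (Pi.single i 1, 0)
  let b : ℝ := g (0, 1)
  have hgf : ∀ x : Fin d → ℝ, ∀ s : ℝ, g (x, s) = ∑ i, a i * x i + b * s := by
    intro x s
    have h1 : (x, s) = ∑ i, x i • ((Pi.single i 1 : Fin d → ℝ), (0:ℝ)) + s • ((0 : Fin d → ℝ), (1:ℝ)) := by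
      ext j
      · simp [Prod.fst_sum, Finset.sum_apply, Pi.single_apply]
      · simp [Prod.snd_sum]
    rw [h1, map_add, map_sum]
    simp only [map_smul, smul_eq_mul]
    simp only [a, b, mul_comm]
  have hmR : m R = m P := funext hRP
  have hb : 0 < b := by
    have h := hg1.trans (hg2 (m R, H R) ⟨R, hR, rfl, le_rfl⟩)
    rw [hmR, hgf, hgf] at h
    have : 0 < b * ε := by linarith
    exact pos_of_mul_pos_left this hε.le
  refine ⟨fun i => -(a i / b), fun Q hQ => ?_⟩
  have h := hg1.trans (hg2 (m Q, H Q) ⟨Q, hQ, rfl, le_rfl⟩)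
  rw [hgf, hgf] at h
  have e1 : ∑ i, -(a i / b) * (∑ z, Q z * f z i - ∑ z, P z * f z i)
      = -((∑ i, a i * m Q i - ∑ i, a i * m P i) / b) := by
    rw [← Finset.sum_sub_distrib, Finset.sum_div, ← Finset.sum_neg_distrib]
    refine Finset.sum_congr rfl fun i _ => ?_
    simp only [m]; ring
  rw [e1, sub_neg_eq_add, ← sub_le_iff_le_add', le_div_iff₀ hb]
  linarith


theorem stmt_16 {Z : Type} [Fintype Z] [Nonempty Z] {d : ℕ}
    (β β' : Z → ℝ → ℝ)
    (hβc : ∀ z, ContinuousOn (β z) (Set.Ici 0))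
    (hβsc : ∀ z, StrictConvexOn ℝ (Set.Ioi 0) (β z))
    (hβd : ∀ z x, 0 < x → HasDerivAt (β z) (β' z x) x)
    (hβ'bot : ∀ z, Filter.Tendsto (β' z) (nhdsWithin 0 (Set.Ioi 0)) Filter.atBot)
    (hβ'top : ∀ z, Filter.Tendsto (β' z) Filter.atTop Filter.atTop)
    (e : Z → ℝ → ℝ)
    (he_pos : ∀ z r, 0 < e z r)
    (he_left : ∀ z r, β' z (e z r) = r)
    (he_right : ∀ z x, 0 < x → e z (β' z x) = x)
    (f : Z → Fin d → ℝ)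
    (prob : Set (Z → ℝ))
    (hprob : prob = {P : Z → ℝ | (∀ z, 0 ≤ P z) ∧ (∑ z, P z) = 1})
    (μ : (Z → ℝ) → Fin d → ℝ)
    (hμ : ∀ P i, μ P i = ∑ z, P z * f z i)
    (H : (Z → ℝ) → ℝ)
    (hH : ∀ Q, H Q = ∑ z, β z (Q z))
    (Λ : (Fin d → ℝ) → ℝ)
    (hΛ : ∀ θ, (∑ z, e z ((∑ i, θ i * f z i) - Λ θ)) = 1)
    (Pθ : (Fin d → ℝ) → Z → ℝ)
    (hPθ : ∀ θ z, Pθ θ z = e z ((∑ i, θ i * f z i) - Λ θ))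
    (Bdiv : (Z → ℝ) → (Z → ℝ) → ℝ)
    (hBdiv : ∀ P Q, Bdiv P Q = ∑ z, (β z (P z) - β z (Q z) - β' z (Q z) * (P z - Q z)))
    (BE : (Z → ℝ) → ℝ)
    (hBE : ∀ P, BE P = ⨅ θ, Bdiv P (Pθ θ))
    (Pr : (Z → ℝ) → Z → ℝ)
    (hPr : ∀ P ∈ prob, Pr P ∈ prob ∧ μ (Pr P) = μ P ∧
      (∀ Q ∈ prob, μ Q = μ P → H (Pr P) ≤ H Q) ∧
      (∀ Q ∈ prob, μ Q = μ P → H Q = H (Pr P) → Q = Pr P))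
    (Pru : (Z → ℝ) → (Z → ℝ) → Z → ℝ)
    (hPru : ∀ u : Z → ℝ, (∑ z, u z) = 0 → u ≠ 0 → ∀ Q ∈ prob,
      Pru u Q ∈ prob ∧ (∃ t : ℝ, ∀ z, Pru u Q z - Q z = t * u z) ∧
      (∀ R ∈ prob, (∃ t : ℝ, ∀ z, R z - Q z = t * u z) → H (Pru u Q) ≤ H R) ∧
      (∀ R ∈ prob, (∃ t : ℝ, ∀ z, R z - Q z = t * u z) → H R = H (Pru u Q) → R = Pru u Q))
    (Pplus : (Z → ℝ) → Set (Z → ℝ))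
    (hPplus : ∀ u, Pplus u = {Q | Q ∈ prob ∧ 0 < ∑ z, (Q z - Pru u Q z) * u z})
    (Bu : (Z → ℝ) → (Z → ℝ) → ℝ)
    (hBu : ∀ u Q, Bu u Q = H Q - H (Pru u Q))
    (Bbar : (Z → ℝ) → ℝ)
    (hBbar : ∀ u, Bbar u = sSup (Bu u '' closure (Pplus u)))
    (N : Set (Z → ℝ))
    (hNdef : N = {w : Z → ℝ | (∑ z, w z) = 0 ∧ ∀ i, (∑ z, w z * f z i) = 0})
    (hNne : ∃ u ∈ N, u ≠ 0) :
    sSup (BE '' prob) = sSup (Bbar '' (N \ {0})) ∧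
    ∀ P ∈ prob, (∀ Q ∈ prob, BE Q ≤ BE P) → 0 < BE P →
      (P - Pr P) ∈ N \ {0} ∧
      (∀ v ∈ N \ {0}, Bbar v ≤ Bbar (P - Pr P)) ∧
      Bbar (P - Pr P) = BE P := by

  have hprob' : prob = stdSimplex ℝ Z := hprob
  subst hprob'
  have hconv : ∀ z, ConvexOn ℝ (Set.Ici 0) (β z) := fun z => aux_conv _ (hβc z) (hβsc z)
  have hHfun : H = fun Q => ∑ z, β z (Q z) := funext hH
  have hHc : ContinuousOn H (stdSimplex ℝ Z) := by
    rw [hHfun]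
    refine continuousOn_finsetSum _ fun z _ => ?_
    exact (hβc z).comp (continuous_apply z).continuousOn fun Q hQ => hQ.1 z
  have hHv : ConvexOn ℝ (stdSimplex ℝ Z) H := by
    refine ⟨convex_stdSimplex ℝ Z, ?_⟩
    intro Q hQ R hR a b ha hb hab
    rw [hH, hH, hH]
    simp only [smul_eq_mul, Finset.mul_sum, ← Finset.sum_add_distrib]
    exact Finset.sum_le_sum fun z _ => (hconv z).2 (hQ.1 z) (hR.1 z) ha hb hab
  have hPθm : ∀ θ, Pθ θ ∈ stdSimplex ℝ Z := by
    intro θ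
    refine ⟨fun z => by rw [hPθ]; exact (he_pos _ _).le, ?_⟩
    simp only [hPθ]; exact hΛ θ
  have hB : ∀ P ∈ stdSimplex ℝ Z, ∀ θ, Bdiv P (Pθ θ) =
      H P - (H (Pθ θ) - ∑ i, θ i * (∑ z, Pθ θ z * f z i - ∑ z, P z * f z i)) := by
    intro P hP θ
    rw [hBdiv, Finset.sum_sub_distrib, Finset.sum_sub_distrib, ← hH, ← hH]
    have h1 : ∑ z, β' z (Pθ θ z) * (P z - Pθ θ z)
        = ∑ i, θ i * (∑ z, P z * f z i - ∑ z, Pθ θ z * f z i) := by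
      have h2 : ∀ z, β' z (Pθ θ z) * (P z - Pθ θ z) =
          ∑ i, θ i * f z i * (P z - Pθ θ z) - Λ θ * (P z - Pθ θ z) := by
        intro z
        rw [← Finset.sum_mul, ← sub_mul]
        congr 1
        rw [hPθ, he_left]
      simp only [h2]
      rw [Finset.sum_sub_distrib, ← Finset.mul_sum, Finset.sum_sub_distrib, hP.2, (hPθm θ).2,
        Finset.sum_comm]
      simp only [sub_self, mul_zero, sub_zero]
      refine Finset.sum_congr rfl fun i _ => ?_
      rw [← Finset.sum_sub_distrib, Finset.mul_sum]
      exact Finset.sum_congr rfl fun z _ => by ring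
    rw [h1]
    have h3 : ∑ i, θ i * (∑ z, P z * f z i - ∑ z, Pθ θ z * f z i)
        = - ∑ i, θ i * (∑ z, Pθ θ z * f z i - ∑ z, P z * f z i) := by
      rw [← Finset.sum_neg_distrib]
      exact Finset.sum_congr rfl fun i _ => by ring
    rw [h3]; ring
  have hBnn : ∀ P ∈ stdSimplex ℝ Z, ∀ θ, 0 ≤ Bdiv P (Pθ θ) := by
    intro P hP θ
    rw [hBdiv]
    refine Finset.sum_nonneg fun z _ => ?_
    have hpos : 0 < Pθ θ z := by rw [hPθ]; exact he_pos _ _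
    exact aux_grad _ (hconv z) _ _ _ (hP.1 z) hpos (hβd z _ hpos)
  have hBE' : ∀ P ∈ stdSimplex ℝ Z, BE P = H P - H (Pr P) := by
    intro P hP
    obtain ⟨h1, h2, h3, -⟩ := hPr P hP
    have h2' : ∀ i, ∑ z, Pr P z * f z i = ∑ z, P z * f z i := by
      intro i; rw [← hμ, ← hμ, h2]
    rw [hBE]
    have hlow : ∀ θ, H P - H (Pr P) ≤ Bdiv P (Pθ θ) := by
      intro θ
      have h := hBnn _ h1 θ
      rw [hB _ h1 θ] at h
      rw [hB _ hP θ]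
      simp only [h2'] at h
      linarith
    refine le_antisymm ?_ (le_ciInf hlow)
    refine le_of_forall_pos_le_add fun ε hε => ?_
    obtain ⟨θ, hθ⟩ := aux_dual f H hHc hHv P (Pr P) h1 h2'
      (fun Q hQ hQm => h3 Q hQ (by funext i; rw [hμ, hμ]; exact hQm i)) ε hε
    refine (ciInf_le ⟨H P - H (Pr P), ?_⟩ θ).trans ?_
    · rintro _ ⟨θ, rfl⟩; exact hlow θ
    · rw [hB _ hP θ]
      have := hθ _ (hPθm θ)
      linarith
  have hBEnn : ∀ P ∈ stdSimplex ℝ Z, 0 ≤ BE P := by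
    intro P hP
    rw [hBE' P hP]
    linarith [(hPr P hP).2.2.1 P hP rfl]
  obtain ⟨M, hM⟩ := (isCompact_stdSimplex ℝ Z).bddAbove_image hHc
  obtain ⟨m, hm⟩ := (isCompact_stdSimplex ℝ Z).bddBelow_image hHc
  have hbdd : BddAbove (BE '' stdSimplex ℝ Z) := by
    refine ⟨M - m, ?_⟩
    rintro _ ⟨P, hP, rfl⟩
    rw [hBE' P hP]
    have := hM ⟨P, hP, rfl⟩
    have := hm ⟨_, (hPr P hP).1, rfl⟩
    linarith
  have hcl : ∀ u, closure (Pplus u) ⊆ stdSimplex ℝ Z := by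
    intro u
    refine closure_minimal ?_ (isClosed_stdSimplex ℝ Z)
    rw [hPplus]; exact fun Q hQ => hQ.1
  have hNmem : ∀ u, u ∈ N \ {0} → (∑ z, u z) = 0 ∧ (∀ i, (∑ z, u z * f z i) = 0) ∧ u ≠ 0 := by
    intro u hu
    rw [hNdef] at hu
    exact ⟨hu.1.1, hu.1.2, hu.2⟩
  have hBule : ∀ u ∈ N \ {0}, ∀ Q ∈ stdSimplex ℝ Z, Bu u Q ≤ BE Q := by
    intro u hu Q hQ
    obtain ⟨hu1, hu2, hu3⟩ := hNmem u hu
    obtain ⟨h1, ⟨t, ht⟩, -, -⟩ := hPru u hu1 hu3 Q hQ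
    rw [hBu, hBE' Q hQ]
    have := (hPr Q hQ).2.2.1 _ h1 (by
      funext i
      rw [hμ, hμ, ← sub_eq_zero, ← Finset.sum_sub_distrib]
      simp only [← sub_mul, ht, mul_assoc]
      rw [← Finset.mul_sum, hu2, mul_zero])
    linarith
  have hBunn : ∀ u ∈ N \ {0}, ∀ Q ∈ stdSimplex ℝ Z, 0 ≤ Bu u Q := by
    intro u hu Q hQ
    obtain ⟨hu1, hu2, hu3⟩ := hNmem u hu
    rw [hBu]
    linarith [(hPru u hu1 hu3 Q hQ).2.2.1 Q hQ ⟨0, by simp⟩]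
  have hS0 : 0 ≤ sSup (BE '' stdSimplex ℝ Z) := by
    refine Real.sSup_nonneg ?_
    rintro _ ⟨P, hP, rfl⟩; exact hBEnn P hP
  have hBble : ∀ u ∈ N \ {0}, ∀ c, 0 ≤ c → (∀ Q ∈ stdSimplex ℝ Z, BE Q ≤ c) → Bbar u ≤ c := by
    intro u hu c hc h
    rw [hBbar]
    refine Real.sSup_le ?_ hc
    rintro _ ⟨Q, hQ, rfl⟩
    exact (hBule u hu Q (hcl u hQ)).trans (h Q (hcl u hQ))
  have hBbnn : ∀ u ∈ N \ {0}, 0 ≤ Bbar u := by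
    intro u hu
    rw [hBbar]
    refine Real.sSup_nonneg ?_
    rintro _ ⟨Q, hQ, rfl⟩; exact hBunn u hu Q (hcl u hQ)
  have hSle : ∀ Q ∈ stdSimplex ℝ Z, BE Q ≤ sSup (BE '' stdSimplex ℝ Z) :=
    fun Q hQ => le_csSup hbdd ⟨Q, hQ, rfl⟩
  have hbdd2 : BddAbove (Bbar '' (N \ {0})) := by
    refine ⟨sSup (BE '' stdSimplex ℝ Z), ?_⟩
    rintro _ ⟨u, hu, rfl⟩
    exact hBble u hu _ hS0 hSle
  have hkey : ∀ P ∈ stdSimplex ℝ Z, 0 < BE P →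
      (P - Pr P) ∈ N \ {0} ∧ BE P ≤ Bbar (P - Pr P) := by
    intro P hP hpos
    obtain ⟨h1, h2, h3, h4⟩ := hPr P hP
    have hne : P - Pr P ≠ 0 := by
      intro h0
      rw [hBE' P hP, ← sub_eq_zero.1 h0] at hpos
      simp at hpos
    have hsum : ∑ z, (P - Pr P) z = 0 := by
      simp only [Pi.sub_apply, Finset.sum_sub_distrib]
      rw [hP.2, h1.2, sub_self]
    have hmem : (P - Pr P) ∈ N \ {0} := by
      refine ⟨?_, hne⟩
      rw [hNdef]
      refine ⟨hsum, fun i => ?_⟩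
      simp only [Pi.sub_apply, sub_mul, Finset.sum_sub_distrib]
      rw [← hμ, ← hμ, h2, sub_self]
    refine ⟨hmem, ?_⟩
    obtain ⟨g1, ⟨t, ht⟩, g3, g4⟩ := hPru _ hsum hne P hP
    have hline : ∃ t : ℝ, ∀ z, Pr P z - P z = t * (P - Pr P) z :=
      ⟨-1, fun z => by simp⟩
    have hle := hBule _ hmem P hP
    rw [hBu, hBE' P hP] at hle
    have hge := g3 _ h1 hline
    have heq : Pr P = Pru (P - Pr P) P := g4 _ h1 hline (by linarith)
    have hPp : P ∈ Pplus (P - Pr P) := by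
      rw [hPplus]
      refine ⟨hP, ?_⟩
      rw [← heq]
      obtain ⟨z, hz⟩ := Function.ne_iff.1 hne
      refine Finset.sum_pos' (fun z _ => mul_self_nonneg _) ⟨z, Finset.mem_univ z, ?_⟩
      exact mul_self_pos.2 hz
    have hBP : BE P = Bu (P - Pr P) P := by
      rw [hBu, hBE' P hP, ← heq]
    rw [hBbar, hBP]
    refine le_csSup ⟨sSup (BE '' stdSimplex ℝ Z), ?_⟩ ⟨P, subset_closure hPp, rfl⟩
    rintro _ ⟨Q, hQ, rfl⟩
    exact (hBule _ hmem Q (hcl _ hQ)).trans (hSle Q (hcl _ hQ))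
  refine ⟨le_antisymm ?_ ?_, ?_⟩
  · have h0 : 0 ≤ sSup (Bbar '' (N \ {0})) := by
      refine Real.sSup_nonneg ?_
      rintro _ ⟨u, hu, rfl⟩; exact hBbnn u hu
    refine Real.sSup_le ?_ h0
    rintro _ ⟨P, hP, rfl⟩
    rcases (hBEnn P hP).eq_or_lt with h | h
    · rw [← h]; exact h0
    · obtain ⟨k1, k2⟩ := hkey P hP h
      exact k2.trans (le_csSup hbdd2 ⟨_, k1, rfl⟩)
  · refine Real.sSup_le ?_ hS0
    rintro _ ⟨u, hu, rfl⟩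
    exact hBble u hu _ hS0 hSle
  · intro P hP hmax hpos
    obtain ⟨k1, k2⟩ := hkey P hP hpos
    refine ⟨k1, fun v hv => (hBble v hv _ hpos.le hmax).trans k2, ?_⟩
    exact le_antisymm (hBble _ k1 _ hpos.le hmax) k2
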